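/- The function d_F is a metric on ℝ³: it is nonnegative, symmetric, satisfies the triangle inequality, and d_F(P,Q) = 0 if and only if P = Q (in particular d_F(P,Q) > 0 when P ≠ Q both project to the same well p₋ or p₊). Moreover it is a length metric: for all P, Q ∈ ℝ³, d_F(P,Q) = inf{ L(Γ) : Γ : [a,b] → ℝ³ admissible, locally Lipschitz, Γ(a) = P, Γ(b) = Q }. -/

import Mathlib

open MeasureTheory Set Filter Topology
open scoped ENNReal

noncomputable section

/-- The Euclidean norm of a vector in `ℝ × ℝ`. -/
def enorm2 (v : ℝ × ℝ) : ℝ := Real.sqrt (v.1 ^ 2 + v.2 ^ 2)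

/-- The degenerate length `E(γ) = ∫ₐᵇ F(γ(t)) |γ'(t)| dt` of a planar curve. -/
def degLen (F : ℝ × ℝ → ℝ) (a b : ℝ) (γ : ℝ → ℝ × ℝ) : ℝ :=
  ∫ t in a..b, F (γ t) * enorm2 (deriv γ t)

/-- The signed area `𝒜(γ) = ∫ₐᵇ γ¹(t) (γ²)'(t) dt` of a planar curve. -/
def sArea (a b : ℝ) (γ : ℝ → ℝ × ℝ) : ℝ :=
  ∫ t in a..b, (γ t).1 * deriv (fun s => (γ s).2) t

/-- A locally Lipschitz curve on `[a,b]` joining `p` to `q`. -/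
def IsCurve (a b : ℝ) (γ : ℝ → ℝ × ℝ) (p q : ℝ × ℝ) : Prop :=
  a ≤ b ∧ LocallyLipschitz γ ∧ γ a = p ∧ γ b = q

/-- The standing hypotheses on the potential `W`: smooth, nonnegative, vanishing exactly at the
two distinct wells `pm` and `pp`, with positive definite Hessians there, and bounded away from
zero near infinity (`liminf_{|p|→∞} W(p) > 0`). -/
structure TwoWell (W : ℝ × ℝ → ℝ) (pm pp : ℝ × ℝ) : Prop where
  smooth : ContDiff ℝ (⊤ : ℕ∞) W
  nonneg : ∀ p, 0 ≤ W p
  wells_ne : pm ≠ pp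
  zeroSet : ∀ p, W p = 0 ↔ p = pm ∨ p = pp
  hess_m : ∀ v : ℝ × ℝ, v ≠ 0 → 0 < iteratedFDeriv ℝ 2 W pm ![v, v]
  hess_p : ∀ v : ℝ × ℝ, v ≠ 0 → 0 < iteratedFDeriv ℝ 2 W pp ![v, v]
  coercive : ∃ c > 0, ∃ R : ℝ, ∀ p : ℝ × ℝ, R ≤ ‖p‖ → c ≤ W p

/-- The singular Carnot–Carathéodory distance on `ℝ³` induced by the conformal factor `F`:
the infimum of degenerate lengths of locally Lipschitz planar curves joining the planar
projections of `P` and `Q` whose signed area equals the difference of third coordinates. -/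
def dCC (F : ℝ × ℝ → ℝ) (P Q : ℝ × ℝ × ℝ) : ℝ :=
  sInf { x | ∃ a b γ, IsCurve a b γ (P.1, P.2.1) (Q.1, Q.2.1) ∧
      sArea a b γ = Q.2.2 - P.2.2 ∧ degLen F a b γ = x }

/-- The length of a curve in `ℝ³` with respect to the metric `dCC F`: the supremum over
finite partitions of the sums of distances of consecutive sample points. -/
def pathLen (F : ℝ × ℝ → ℝ) (a b : ℝ) (Γ : ℝ → ℝ × ℝ × ℝ) : ℝ :=
  sSup { x | ∃ (n : ℕ) (t : Fin (n + 1) → ℝ), Monotone t ∧ t 0 = a ∧ t (Fin.last n) = b ∧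
      x = ∑ i : Fin n, dCC F (Γ (t i.castSucc)) (Γ (t i.succ)) }

/-- A curve `Γ = (Γ¹,Γ²,Γ³) : ℝ → ℝ³` is admissible on `[a,b]` if
`(Γ³)'(t) = Γ¹(t) (Γ²)'(t)` for a.e. `t ∈ (a,b)`. -/
def Admissible (a b : ℝ) (Γ : ℝ → ℝ × ℝ × ℝ) : Prop :=
  ∀ᵐ t : ℝ ∂volume, t ∈ Set.Ioo a b →
    deriv (fun s => (Γ s).2.2) t = (Γ t).1 * deriv (fun s => (Γ s).2.1) t

/-- The planar projection `Π(Γ) = (Γ¹,Γ²)` of a curve in `ℝ³`. -/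
def projCurve (Γ : ℝ → ℝ × ℝ × ℝ) : ℝ → ℝ × ℝ := fun t => ((Γ t).1, (Γ t).2.1)

lemma ll_ae_diff {E : Type*} [NormedAddCommGroup E] [NormedSpace ℝ E] [FiniteDimensional ℝ E]
    {γ : ℝ → E} (h : LocallyLipschitz γ) : ∀ᵐ t : ℝ, DifferentiableAt ℝ γ t := by
  have key : ∀ n : ℕ, ∀ᵐ t : ℝ, t ∈ Icc (-(n:ℝ)) n → DifferentiableWithinAt ℝ γ (Icc (-(n:ℝ)) n) t := by
    intro n
    obtain ⟨K, hK⟩ := (h.locallyLipschitzOn (s := Icc (-(n:ℝ)) n)).exists_lipschitzOnWith_of_compact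
      isCompact_Icc
    exact hK.ae_differentiableWithinAt_of_mem_real
  rw [← ae_all_iff] at key
  filter_upwards [key] with t ht
  obtain ⟨n, hn⟩ := exists_nat_gt |t|
  rw [abs_lt] at hn
  exact (ht n ⟨hn.1.le, hn.2.le⟩).differentiableAt (Icc_mem_nhds hn.1 hn.2)

lemma ll_deriv_bound {E : Type*} [NormedAddCommGroup E] [NormedSpace ℝ E]
    {γ : ℝ → E} (h : LocallyLipschitz γ) (a b : ℝ) : ∃ K : ℝ, ∀ t ∈ Icc a b, ‖deriv γ t‖ ≤ K := by
  obtain ⟨K, hK⟩ := (h.locallyLipschitzOn (s := Icc (a-1) (b+1))).exists_lipschitzOnWith_of_compact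
      isCompact_Icc
  refine ⟨K, fun t ht => norm_deriv_le_of_lipschitzOn (Icc_mem_nhds (by linarith [ht.1]) (by linarith [ht.2])) hK⟩

lemma ll_ftc {f : ℝ → ℝ} (h : LocallyLipschitz f) (a b : ℝ) :
    ∫ t in a..b, deriv f t = f b - f a := by
  obtain ⟨K, hK⟩ := (h.locallyLipschitzOn (s := uIcc a b)).exists_lipschitzOnWith_of_compact
      isCompact_uIcc
  exact hK.absolutelyContinuousOnInterval.integral_deriv_eq_sub

/-- bounded measurable functions are interval integrable -/
lemma ii_of_bound {f : ℝ → ℝ} (hm : Measurable f) {a b : ℝ}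
    (hb : ∃ K : ℝ, ∀ t ∈ uIcc a b, |f t| ≤ K) : IntervalIntegrable f volume a b := by
  obtain ⟨K, hK⟩ := hb
  rw [intervalIntegrable_iff]
  refine Measure.integrableOn_of_bounded (M := K) (by simp) hm.aestronglyMeasurable ?_
  filter_upwards [ae_restrict_mem measurableSet_uIoc] with t ht
  exact hK t (uIoc_subset_uIcc ht)

lemma ii_mul {g f : ℝ → ℝ} (hg : Continuous g) (hm : Measurable f) {a b : ℝ}
    (hb : ∃ K : ℝ, ∀ t ∈ uIcc a b, |f t| ≤ K) :
    IntervalIntegrable (fun t => g t * f t) volume a b := by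
  refine ii_of_bound (hg.measurable.mul hm) ?_
  obtain ⟨K, hK⟩ := hb
  obtain ⟨M, hM⟩ := isCompact_uIcc.exists_bound_of_continuousOn (hg.continuousOn (s := uIcc a b))
  refine ⟨M * K, fun t ht => ?_⟩
  rw [Pi.mul_apply, abs_mul]
  have := hM t ht
  exact mul_le_mul this (hK t ht) (abs_nonneg _) ((norm_nonneg _).trans this)

lemma enorm2_nonneg (v : ℝ × ℝ) : 0 ≤ enorm2 v := Real.sqrt_nonneg _

lemma enorm2_cont : Continuous enorm2 := by unfold enorm2; fun_prop

lemma abs_fst_le_enorm2 (v : ℝ × ℝ) : |v.1| ≤ enorm2 v :=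
  Real.abs_le_sqrt (by nlinarith [sq_nonneg v.2])

lemma abs_snd_le_enorm2 (v : ℝ × ℝ) : |v.2| ≤ enorm2 v :=
  Real.abs_le_sqrt (by nlinarith [sq_nonneg v.1])

lemma norm_le_enorm2 (v : ℝ × ℝ) : ‖v‖ ≤ enorm2 v :=
  max_le (abs_fst_le_enorm2 v) (abs_snd_le_enorm2 v)

lemma enorm2_le (v : ℝ × ℝ) : enorm2 v ≤ 2 * ‖v‖ := by
  unfold enorm2
  have h1 : |v.1| ≤ ‖v‖ := le_max_left _ _
  have h2 : |v.2| ≤ ‖v‖ := le_max_right _ _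
  rw [Real.sqrt_le_left (by positivity)]
  nlinarith [sq_abs v.1, sq_abs v.2, abs_nonneg v.1, abs_nonneg v.2]

lemma enorm2_neg (v : ℝ × ℝ) : enorm2 (-v) = enorm2 v := by simp [enorm2]

lemma ll_snd {γ : ℝ → ℝ × ℝ} (h : LocallyLipschitz γ) : LocallyLipschitz (fun s => (γ s).2) :=
  LipschitzWith.prod_snd.locallyLipschitz.comp h

lemma ll_fst {γ : ℝ → ℝ × ℝ} (h : LocallyLipschitz γ) : LocallyLipschitz (fun s => (γ s).1) :=
  LipschitzWith.prod_fst.locallyLipschitz.comp h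

lemma ii_deg {F : ℝ × ℝ → ℝ} (hF : Continuous F) {γ : ℝ → ℝ × ℝ} (h : LocallyLipschitz γ)
    (a b : ℝ) : IntervalIntegrable (fun t => F (γ t) * enorm2 (deriv γ t)) volume a b := by
  refine ii_mul (hF.comp h.continuous) (enorm2_cont.measurable.comp (measurable_deriv γ)) ?_
  obtain ⟨K, hK⟩ := ll_deriv_bound h (min a b) (max a b)
  refine ⟨2 * K, fun t ht => ?_⟩
  rw [Function.comp_apply, abs_of_nonneg (enorm2_nonneg _)]
  exact (enorm2_le _).trans (by linarith [hK t ht])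

lemma ii_area {g f : ℝ → ℝ} (hg : Continuous g) (h : LocallyLipschitz f)
    (a b : ℝ) : IntervalIntegrable (fun t => g t * deriv f t) volume a b := by
  refine ii_mul hg (measurable_deriv _) ?_
  exact ll_deriv_bound h (min a b) (max a b)

lemma degLen_nonneg {F : ℝ × ℝ → ℝ} (h0 : ∀ p, 0 ≤ F p) {a b : ℝ} (hab : a ≤ b) (γ : ℝ → ℝ × ℝ) :
    0 ≤ degLen F a b γ :=
  intervalIntegral.integral_nonneg hab fun _ _ => mul_nonneg (h0 _) (enorm2_nonneg _)

lemma dCC_nonneg {F : ℝ × ℝ → ℝ} (h0 : ∀ p, 0 ≤ F p) (P Q : ℝ × ℝ × ℝ) : 0 ≤ dCC F P Q := by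
  apply Real.sInf_nonneg
  rintro x ⟨a, b, γ, hγ, -, rfl⟩
  exact degLen_nonneg h0 hγ.1 γ

lemma dCC_le {F : ℝ × ℝ → ℝ} (h0 : ∀ p, 0 ≤ F p) {P Q : ℝ × ℝ × ℝ} {a b : ℝ} {γ : ℝ → ℝ × ℝ}
    (hγ : IsCurve a b γ (P.1, P.2.1) (Q.1, Q.2.1)) (hA : sArea a b γ = Q.2.2 - P.2.2) :
    dCC F P Q ≤ degLen F a b γ := by
  refine csInf_le ⟨0, ?_⟩ ⟨a, b, γ, hγ, hA, rfl⟩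
  rintro x ⟨a, b, γ, hγ, -, rfl⟩
  exact degLen_nonneg h0 hγ.1 γ

/-- existence of a competitor -/
lemma exists_curve (P Q : ℝ × ℝ × ℝ) : ∃ a b γ, IsCurve a b γ (P.1, P.2.1) (Q.1, Q.2.1) ∧
      sArea a b γ = Q.2.2 - P.2.2 := by
  obtain ⟨p1, p2, p3⟩ := P
  obtain ⟨q1, q2, q3⟩ := Q
  set m : ℝ := 60 - 10 * (q2 - p2) with hm
  set g : ℝ → ℝ := fun t => p2 + t * (q2 - p2) + m * (t ^ 2 * (1 - t)) with hg
  have hd : ∀ t, HasDerivAt g ((q2 - p2) + m * (2 * t - 3 * t ^ 2)) t := by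
    intro t
    have h1 := ((hasDerivAt_id t).mul_const (q2 - p2)).const_add p2
    have h2 := (((hasDerivAt_id t).pow 2).mul ((hasDerivAt_id t).const_sub 1)).const_mul m
    refine HasDerivAt.congr_deriv (f := g) (h1.add h2) ?_
    simp only [id_eq, Pi.pow_apply, Nat.cast_ofNat, Nat.reduceSub, pow_one]; ring
  set f : ℝ → ℝ → ℝ := fun s t => p1 + t * (q1 - p1) + s * (t * (1 - t)) with hf
  have harea : ∀ s, sArea 0 1 (fun t => (f s t, g t)) = (p1 * (q2 - p2) + (q1 - p1) * (q2 - p2) / 2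
      - (q1 - p1) * m / 12) + s := by
    intro s
    unfold sArea
    have : ∀ t, deriv (fun s => g s) t = (q2 - p2) + m * (2 * t - 3 * t ^ 2) := fun t => (hd t).deriv
    simp only [this]
    set G : ℝ → ℝ := fun t => p1 * ((q2 - p2) * t + m * (t ^ 2 - t ^ 3))
      + (q1 - p1) * ((q2 - p2) * t ^ 2 / 2 + m * (2 * t ^ 3 / 3 - 3 * t ^ 4 / 4))
      + s * ((q2 - p2) * (t ^ 2 / 2 - t ^ 3 / 3) + m * (2 * t ^ 3 / 3 - 5 * t ^ 4 / 4 + 3 * t ^ 5 / 5)) with hG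
    have hp : ∀ (n : ℕ) t, HasDerivAt (fun t : ℝ => t ^ n) (n * t ^ (n - 1)) t := fun n t => hasDerivAt_pow n t
    have hGd : ∀ t, HasDerivAt G (f s t * ((q2 - p2) + m * (2 * t - 3 * t ^ 2))) t := by
      intro t
      have e1 := (((hasDerivAt_id t).const_mul (q2 - p2)).add (((hp 2 t).sub (hp 3 t)).const_mul m)).const_mul p1
      have e2 := ((((hp 2 t).const_mul (q2 - p2)).div_const 2).add
        (((((hp 3 t).const_mul 2).div_const 3).sub (((hp 4 t).const_mul 3).div_const 4)).const_mul m)).const_mul (q1 - p1)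
      have e3 := (((((hp 2 t).div_const 2).sub ((hp 3 t).div_const 3)).const_mul (q2 - p2)).add
        ((((((hp 3 t).const_mul 2).div_const 3).sub (((hp 4 t).const_mul 5).div_const 4)).add
          (((hp 5 t).const_mul 3).div_const 5)).const_mul m)).const_mul s
      refine HasDerivAt.congr_deriv (f := G) ((e1.add e2).add e3) ?_
      simp [hf]; ring
    rw [intervalIntegral.integral_eq_sub_of_hasDerivAt (f := G) (fun t _ => hGd t)]
    · simp only [hG, hm]; ring
    · apply Continuous.intervalIntegrable
      simp only [hf]
      fun_prop
  refine ⟨0, 1, fun t => (f ((q3 - p3) - (p1 * (q2 - p2) + (q1 - p1) * (q2 - p2) / 2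
      - (q1 - p1) * m / 12)) t, g t), ⟨zero_le_one, ?_, ?_, ?_⟩, ?_⟩
  · apply ContDiff.locallyLipschitz (𝕂 := ℝ)
    simp only [hf, hg]
    fun_prop
  · simp [hf, hg]
  · simp [hf, hg]
  · rw [harea]; ring

lemma quad_lower {W : ℝ × ℝ → ℝ} (hs : ContDiff ℝ 2 W) (h0 : ∀ p, 0 ≤ W p) {p : ℝ × ℝ}
    (hp : W p = 0) (hh : ∀ v : ℝ × ℝ, v ≠ 0 → 0 < iteratedFDeriv ℝ 2 W p ![v, v]) :
    ∃ c > 0, ∃ r > 0, ∀ x, ‖x - p‖ < r → c * ‖x - p‖ ^ 2 ≤ W x := by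
  have hmin : IsLocalMin W p := Filter.Eventually.of_forall fun x => by rw [hp]; exact h0 x
  have hd0 : fderiv ℝ W p = 0 := hmin.fderiv_eq_zero
  have hdiff : Differentiable ℝ W := hs.differentiable (by norm_num)
  have hs1 : ContDiff ℝ 1 (fderiv ℝ W) := hs.fderiv_right (by norm_num)
  have hD : HasFDerivAt (fderiv ℝ W) (fderiv ℝ (fderiv ℝ W) p) p :=
    (hs1.differentiable (by norm_num) p).hasFDerivAt
  set D := fderiv ℝ (fderiv ℝ W) p with hDdef
  have hh' : ∀ v : ℝ × ℝ, v ≠ 0 → 0 < D v v := by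
    intro v hv
    have := hh v hv
    rw [iteratedFDeriv_two_apply] at this
    simpa using this
  obtain ⟨l, hl, hlb⟩ : ∃ l > 0, ∀ v : ℝ × ℝ, l * ‖v‖ ^ 2 ≤ D v v := by
    have hc : Continuous fun v : ℝ × ℝ => D v v := D.continuous.clm_apply continuous_id
    have hne : (Metric.sphere (0 : ℝ × ℝ) 1).Nonempty := NormedSpace.sphere_nonempty.2 zero_le_one
    obtain ⟨u, hu, hmin⟩ := (isCompact_sphere (0 : ℝ × ℝ) 1).exists_isMinOn hne hc.continuousOn
    have hu1 : ‖u‖ = 1 := by simpa using hu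
    refine ⟨D u u, hh' u (by rintro rfl; simp at hu1), fun v => ?_⟩
    by_cases hv : v = 0
    · simp [hv]
    have hn : ‖v‖ ≠ 0 := norm_ne_zero_iff.2 hv
    have := hmin (show ‖v‖⁻¹ • v ∈ Metric.sphere (0 : ℝ × ℝ) 1 by simp [norm_smul, hn])
    simp only [mem_ofPred_eq, map_smul, smul_apply, smul_eq_mul] at this
    calc D u u * ‖v‖ ^ 2 ≤ (‖v‖⁻¹ * (‖v‖⁻¹ * D v v)) * ‖v‖ ^ 2 := by gcongr
      _ = D v v := by field_simp
  have hlo := (hasFDerivAt_iff_isLittleO_nhds_zero.1 hD).def (half_pos hl)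
  rw [Metric.eventually_nhds_iff] at hlo
  obtain ⟨r, hr, hb⟩ := hlo
  refine ⟨l / 4, by positivity, r, hr, fun x hx => ?_⟩
  set v := x - p with hv
  have hg : ∀ t : ℝ, HasDerivAt (fun t : ℝ => W (p + t • v) - l / 4 * t ^ 2 * ‖v‖ ^ 2)
      (fderiv ℝ W (p + t • v) v - l / 4 * (2 * t) * ‖v‖ ^ 2) t := by
    intro t
    have h1 : HasDerivAt (fun t : ℝ => p + t • v) v t := by
      simpa using ((hasDerivAt_id t).smul_const v).const_add p
    have h2 := (hdiff (p + t • v)).hasFDerivAt.comp_hasDerivAt t h1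
    have h3 := ((hasDerivAt_pow 2 t).const_mul (l / 4)).mul_const (‖v‖ ^ 2)
    refine HasDerivAt.congr_deriv (h2.sub h3) ?_
    simp
  have hmono : MonotoneOn (fun t : ℝ => W (p + t • v) - l / 4 * t ^ 2 * ‖v‖ ^ 2) (Icc 0 1) := by
    apply monotoneOn_of_deriv_nonneg (convex_Icc 0 1)
    · exact fun t _ => (hg t).continuousAt.continuousWithinAt
    · exact fun t _ => (hg t).differentiableAt.differentiableWithinAt
    · intro t ht
      rw [interior_Icc] at ht
      rw [(hg t).deriv]
      have htv : ‖t • v‖ < r := by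
        rw [norm_smul, Real.norm_of_nonneg ht.1.le]
        nlinarith [norm_nonneg v, ht.2, ht.1]
      have h1 := hb (y := t • v) (by simpa using htv)
      rw [hd0, sub_zero] at h1
      have h2 := (ContinuousLinearMap.le_opNorm (fderiv ℝ W (p + t • v) - D (t • v)) v).trans
        (mul_le_mul_of_nonneg_right h1 (norm_nonneg _))
      rw [sub_apply, map_smul, smul_apply, smul_eq_mul,
        norm_smul, Real.norm_of_nonneg ht.1.le, Real.norm_eq_abs, abs_le] at h2
      have h3 := mul_le_mul_of_nonneg_left (hlb v) ht.1.le
      nlinarith [h2.1]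
  have := hmono (left_mem_Icc.2 zero_le_one) (right_mem_Icc.2 zero_le_one) zero_le_one
  simp only [zero_smul, add_zero, hp, one_smul, hv, add_sub_cancel] at this
  rw [hv]
  linarith

lemma lower_lin {W : ℝ × ℝ → ℝ} {pm pp : ℝ × ℝ} (hW : TwoWell W pm pp) (p : ℝ × ℝ) :
    ∃ c > 0, ∃ r > 0, ∀ x, ‖x - p‖ < r → c * ‖x - p‖ ≤ Real.sqrt (W x) := by
  have hs : ContDiff ℝ 2 W := by exact_mod_cast contDiff_infty.1 hW.smooth 2
  by_cases h : W p = 0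
  · have hh : ∀ v : ℝ × ℝ, v ≠ 0 → 0 < iteratedFDeriv ℝ 2 W p ![v, v] := by
      rcases (hW.zeroSet p).1 h with rfl | rfl
      · exact hW.hess_m
      · exact hW.hess_p
    obtain ⟨c, hc, r, hr, hb⟩ := quad_lower hs hW.nonneg h hh
    refine ⟨Real.sqrt c, Real.sqrt_pos.2 hc, r, hr, fun x hx => ?_⟩
    apply Real.le_sqrt_of_sq_le
    rw [mul_pow, Real.sq_sqrt hc.le]
    exact hb x hx
  · have hpos : 0 < Real.sqrt (W p) := Real.sqrt_pos.2 (lt_of_le_of_ne (hW.nonneg p) (Ne.symm h))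
    have hc : Continuous fun x => Real.sqrt (W x) := Real.continuous_sqrt.comp hs.continuous
    have := (hc.tendsto p).eventually (lt_mem_nhds (half_lt_self hpos))
    rw [Metric.eventually_nhds_iff] at this
    obtain ⟨r, hr, hb⟩ := this
    refine ⟨Real.sqrt (W p) / 2, by positivity, min r 1, by positivity, fun x hx => ?_⟩
    have h1 := hb (y := x) (by rw [dist_eq_norm]; exact hx.trans_le (min_le_left _ _))
    have h2 := hx.trans_le (min_le_right _ _)
    nlinarith

/-- a cutoff calibration -/
lemma calib {W : ℝ × ℝ → ℝ} {pm pp : ℝ × ℝ} (hW : TwoWell W pm pp) (p : ℝ × ℝ) {R : ℝ}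
    (hR : 0 < R) :
    ∃ ρ > 0, ρ ≤ R ∧ ∃ c > 0, (∀ x, ‖x - p‖ < ρ → c * ‖x - p‖ ≤ Real.sqrt (W x)) ∧
      ∃ f : ℝ × ℝ → ℝ, ∃ K > 0, ContDiff ℝ 1 f ∧ f p = 1 ∧ (∀ x, ρ ≤ ‖x - p‖ → f x = 0) ∧
        ∀ x v, |fderiv ℝ f x v| ≤ K * (Real.sqrt (W x) * enorm2 v) := by
  obtain ⟨c, hc, r, hr, hb⟩ := lower_lin hW p
  set ρ := min R (r / 2) with hρ
  have hρ0 : 0 < ρ := by positivity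
  have hρr : ρ < r := (min_le_right _ _).trans_lt (by linarith)
  refine ⟨ρ, hρ0, min_le_left _ _, c, hc, fun x hx => hb x (hx.trans hρr), ?_⟩
  let f : ContDiffBump p := ⟨ρ / 2, ρ, by positivity, by linarith⟩
  have hf1 : ContDiff ℝ 1 f := f.contDiff
  obtain ⟨M, hM⟩ : ∃ M, ∀ x, ‖fderiv ℝ f x‖ ≤ M :=
    (hf1.continuous_fderiv (by norm_num)).bounded_above_of_compact_support
      (f.hasCompactSupport.fderiv (𝕜 := ℝ))
  have hM0 : 0 ≤ M := (norm_nonneg _).trans (hM p)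
  refine ⟨f, (M + 1) / (c * (ρ / 2)), by positivity, hf1, ?_, ?_, ?_⟩
  · exact f.one_of_mem_closedBall (Metric.mem_closedBall_self (by positivity))
  · intro x hx
    exact f.zero_of_le_dist (by rw [dist_eq_norm]; exact hx)
  · intro x v
    have hnn : 0 ≤ (M + 1) / (c * (ρ / 2)) * (Real.sqrt (W x) * enorm2 v) :=
      mul_nonneg (by positivity) (mul_nonneg (Real.sqrt_nonneg _) (enorm2_nonneg _))
    by_cases h1 : ‖x - p‖ < ρ / 2
    · have : fderiv ℝ f x = 0 := by
        have := f.eventuallyEq_one_of_mem_ball (x := x) (by rw [Metric.mem_ball, dist_eq_norm]; exact h1)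
        rw [this.fderiv_eq]
        simp
      rw [this]
      simpa using hnn
    by_cases h2 : ρ < ‖x - p‖
    · have : fderiv ℝ f x = 0 := by
        have : (f : ℝ × ℝ → ℝ) =ᶠ[𝓝 x] 0 := by
          have : ∀ᶠ y in 𝓝 x, ρ < ‖y - p‖ :=
            (by fun_prop : Continuous fun y : ℝ × ℝ => ‖y - p‖).continuousAt.eventually (lt_mem_nhds h2)
          filter_upwards [this] with y hy
          exact f.zero_of_le_dist (by rw [dist_eq_norm]; exact hy.le)
        rw [this.fderiv_eq]
        simp
      rw [this]
      simpa using hnn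
    push Not at h1 h2
    have h3 := hb x (h2.trans_lt hρr)
    have h4 : c * (ρ / 2) ≤ Real.sqrt (W x) := le_trans (by gcongr) h3
    have h5 : |fderiv ℝ f x v| ≤ M * enorm2 v :=
      ((fderiv ℝ f x).le_opNorm v).trans (mul_le_mul (hM x) (norm_le_enorm2 v) (norm_nonneg _) hM0)
    refine h5.trans ?_
    have h6 := enorm2_nonneg v
    calc M * enorm2 v ≤ (M + 1) * enorm2 v := by nlinarith
      _ = (M + 1) / (c * (ρ / 2)) * (c * (ρ / 2) * enorm2 v) := by field_simp
      _ ≤ _ := by gcongr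

lemma calib_curve {F : ℝ × ℝ → ℝ} (hF : Continuous F) {f : ℝ × ℝ → ℝ} {K : ℝ}
    (hf : ContDiff ℝ 1 f) (hK : ∀ x v, |fderiv ℝ f x v| ≤ K * (F x * enorm2 v))
    {γ : ℝ → ℝ × ℝ} (h : LocallyLipschitz γ) {a b : ℝ} (hab : a ≤ b) :
    |f (γ b) - f (γ a)| ≤ K * degLen F a b γ := by
  have hl : LocallyLipschitz (f ∘ γ) := hf.locallyLipschitz.comp h
  have e : ∫ t in a..b, deriv (f ∘ γ) t = f (γ b) - f (γ a) := ll_ftc hl a b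
  rw [← e, degLen, ← intervalIntegral.integral_const_mul, ← Real.norm_eq_abs]
  apply intervalIntegral.norm_integral_le_of_norm_le hab
  · filter_upwards [ll_ae_diff h] with t ht _
    have := ((hf.differentiable (by norm_num)) (γ t)).hasFDerivAt.comp_hasDerivAt t ht.hasDerivAt
    rw [this.deriv]
    exact hK _ _
  · exact (ii_deg hF h a b).const_mul K

lemma degLen_mono {F : ℝ × ℝ → ℝ} (hF : Continuous F) (h0 : ∀ p, 0 ≤ F p)
    {γ : ℝ → ℝ × ℝ} (h : LocallyLipschitz γ) {a b c : ℝ} (hcb : c ≤ b) :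
    degLen F a c γ ≤ degLen F a b γ := by
  have : degLen F a c γ + degLen F c b γ = degLen F a b γ :=
    intervalIntegral.integral_add_adjacent_intervals (ii_deg hF h a c) (ii_deg hF h c b)
  linarith [degLen_nonneg h0 hcb γ]

lemma dCC_pos {W : ℝ × ℝ → ℝ} {pm pp : ℝ × ℝ} (hW : TwoWell W pm pp) {P Q : ℝ × ℝ × ℝ}
    (hPQ : P ≠ Q) : 0 < dCC (fun p => Real.sqrt (W p)) P Q := by
  set F : ℝ × ℝ → ℝ := fun p => Real.sqrt (W p) with hFdef
  have hF : Continuous F := Real.continuous_sqrt.comp hW.smooth.continuous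
  have h0 : ∀ p, 0 ≤ F p := fun p => Real.sqrt_nonneg _
  suffices H : ∃ ε > 0, ∀ a b γ, IsCurve a b γ (P.1, P.2.1) (Q.1, Q.2.1) →
      sArea a b γ = Q.2.2 - P.2.2 → ε ≤ degLen F a b γ by
    obtain ⟨ε, hε, H⟩ := H
    refine hε.trans_le (le_csInf ?_ ?_)
    · obtain ⟨a, b, γ, h1, h2⟩ := exists_curve P Q
      exact ⟨_, a, b, γ, h1, h2, rfl⟩
    · rintro x ⟨a, b, γ, h1, h2, rfl⟩
      exact H a b γ h1 h2
  set p : ℝ × ℝ := (P.1, P.2.1) with hp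
  set q : ℝ × ℝ := (Q.1, Q.2.1) with hq
  by_cases hpq : q = p
  · have h3 : Q.2.2 - P.2.2 ≠ 0 := by
      intro h
      apply hPQ
      rw [hp, hq, Prod.mk.injEq] at hpq
      exact Prod.ext hpq.1.symm (Prod.ext hpq.2.symm (by linarith))
    obtain ⟨ρ, hρ, -, c, hc, hb, f, K, hK, hf, hf1, hf0, hfK⟩ := calib hW p one_pos
    refine ⟨min (1 / K) (c * |Q.2.2 - P.2.2|), lt_min (by positivity)
      (mul_pos hc (abs_pos.2 h3)), fun a b γ hγ hA => ?_⟩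
    obtain ⟨hab, hl, ha, hb'⟩ := hγ
    by_cases hout : ∃ t ∈ Icc a b, ρ ≤ ‖γ t - p‖
    · obtain ⟨t, ht, hto⟩ := hout
      refine (min_le_left _ _).trans (le_trans ?_ (degLen_mono hF h0 hl ht.2))
      have := calib_curve hF hf hfK hl ht.1
      rw [hf0 _ hto, ha, hf1] at this
      rw [div_le_iff₀ hK]
      norm_num at this
      linarith
    · push Not at hout
      refine (min_le_right _ _).trans ?_
      have hftc : ∫ t in a..b, deriv (fun s => (γ s).2) t = (γ b).2 - (γ a).2 :=
        ll_ftc (ll_snd hl) a b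
      have hzero : (γ b).2 - (γ a).2 = 0 := by rw [ha, hb', hpq]; ring
      have e : sArea a b γ = ∫ t in a..b, ((γ t).1 - p.1) * deriv (fun s => (γ s).2) t := by
        have : ∀ t, ((γ t).1 - p.1) * deriv (fun s => (γ s).2) t =
          (γ t).1 * deriv (fun s => (γ s).2) t - p.1 * deriv (fun s => (γ s).2) t := fun t => by ring
        simp only [this]
        rw [intervalIntegral.integral_sub (ii_area (ll_fst hl).continuous (ll_snd hl) a b)
          (ii_area continuous_const (ll_snd hl) a b), intervalIntegral.integral_const_mul, hftc, hzero]
        simp [sArea]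
      rw [← hA, e, ← abs_of_pos hc, ← abs_mul, ← intervalIntegral.integral_const_mul, ← Real.norm_eq_abs]
      apply intervalIntegral.norm_integral_le_of_norm_le hab
      · filter_upwards [ll_ae_diff hl] with t ht htm
        have h1 := hout t ⟨htm.1.le, htm.2⟩
        have h2 := hb _ h1
        have h4 : deriv (fun s => (γ s).2) t = (deriv γ t).2 := by
          have := (hasFDerivAt_snd (𝕜 := ℝ) (p := γ t)).comp_hasDerivAt t ht.hasDerivAt
          exact this.deriv
        rw [h4, Real.norm_eq_abs, abs_mul, abs_mul, abs_of_pos hc, ← mul_assoc]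
        have h5 : |(γ t).1 - p.1| ≤ ‖γ t - p‖ := le_max_left _ _
        have h6 : c * |(γ t).1 - p.1| ≤ c * ‖γ t - p‖ := by gcongr
        exact mul_le_mul (h6.trans h2) (abs_snd_le_enorm2 _) (abs_nonneg _) (h0 _)
      · exact ii_deg hF hl a b
  · obtain ⟨ρ, hρ, hρR, c, hc, hb, f, K, hK, hf, hf1, hf0, hfK⟩ :=
      calib hW p (norm_pos_iff.2 (sub_ne_zero.2 hpq))
    refine ⟨1 / K, by positivity, fun a b γ hγ _ => ?_⟩
    obtain ⟨hab, hl, ha, hb'⟩ := hγ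
    have := calib_curve hF hf hfK hl hab
    rw [ha, hb', hf1, hf0 q hρR] at this
    rw [div_le_iff₀ hK]
    norm_num at this
    linarith

lemma dCC_symm_le {F : ℝ × ℝ → ℝ} (h0 : ∀ p, 0 ≤ F p) (P Q : ℝ × ℝ × ℝ) :
    dCC F P Q ≤ dCC F Q P := by
  refine le_csInf ?_ ?_
  · obtain ⟨a, b, γ, h1, h2⟩ := exists_curve Q P
    exact ⟨_, a, b, γ, h1, h2, rfl⟩
  rintro x ⟨a, b, γ, ⟨hab, hl, ha, hb⟩, h2, rfl⟩
  have e1 : degLen F (-b) (-a) (fun t => γ (-t)) = degLen F a b γ := by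
    unfold degLen
    rw [← intervalIntegral.integral_comp_neg]
    congr 1
    ext t
    simp only [deriv_comp_neg, enorm2_neg, neg_neg]
  have e2 : sArea (-b) (-a) (fun t => γ (-t)) = - sArea a b γ := by
    unfold sArea
    rw [← intervalIntegral.integral_comp_neg, ← intervalIntegral.integral_neg]
    congr 1
    ext t
    rw [deriv_comp_neg (fun s => (γ s).2)]
    simp only [neg_neg]
    ring
  rw [← e1]
  refine dCC_le h0 ⟨by linarith, ?_, by simpa using hb, by simpa using ha⟩ (by rw [e2, h2]; ring)
  exact hl.comp (LipschitzWith.id.neg.locallyLipschitz)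

lemma dCC_triangle {F : ℝ × ℝ → ℝ} (hF : Continuous F) (h0 : ∀ p, 0 ≤ F p) (P Q R : ℝ × ℝ × ℝ) :
    dCC F P R ≤ dCC F P Q + dCC F Q R := by
  have hne : ∀ P Q : ℝ × ℝ × ℝ, { x | ∃ a b γ, IsCurve a b γ (P.1, P.2.1) (Q.1, Q.2.1) ∧
      sArea a b γ = Q.2.2 - P.2.2 ∧ degLen F a b γ = x }.Nonempty := by
    intro P Q
    obtain ⟨a, b, γ, h1, h2⟩ := exists_curve P Q
    exact ⟨_, a, b, γ, h1, h2, rfl⟩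
  rw [← sub_le_iff_le_add]
  refine le_csInf (hne P Q) ?_
  rintro x ⟨a, b, γ, ⟨hab, hl, ha, hb⟩, hA, rfl⟩
  rw [sub_le_comm]
  refine le_csInf (hne Q R) ?_
  rintro y ⟨c, d, η, ⟨hcd, hl', hc, hd⟩, hA', rfl⟩
  rw [sub_le_iff_le_add']
  set σ : ℝ → ℝ × ℝ := fun t => γ (min t b) + η (max t b + (c - b)) - γ b with hσ
  have hσl : LocallyLipschitz σ := by
    have h1 : LocallyLipschitz (fun t : ℝ => γ (min t b)) :=
      hl.comp (LocallyLipschitz.id.min_const b)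
    have h2 : LocallyLipschitz (fun t : ℝ => η (max t b + (c - b))) :=
      hl'.comp ((LocallyLipschitz.id.max_const b).add (LocallyLipschitz.const (c - b)))
    exact (h1.add h2).sub (LocallyLipschitz.const (γ b))
  have hγη : η c = γ b := hc.trans hb.symm
  have hL : ∀ t ≤ b, σ t = γ t := by
    intro t ht
    simp [hσ, min_eq_left ht, max_eq_right ht, hγη]
  have hR : ∀ t, b ≤ t → σ t = η (t + (c - b)) := by
    intro t ht
    simp [hσ, min_eq_right ht, max_eq_left ht]
  have hLe : ∀ t < b, σ =ᶠ[𝓝 t] γ := fun t ht => by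
    filter_upwards [gt_mem_nhds ht] with s hs using hL s hs.le
  have hRe : ∀ t, b < t → σ =ᶠ[𝓝 t] fun s => η (s + (c - b)) := fun t ht => by
    filter_upwards [lt_mem_nhds ht] with s hs using hR s hs.le
  have hne' : ∀ᵐ t : ℝ, t ≠ b := by simp [ae_iff, measure_singleton]
  set e := d - (c - b) with he
  have hbe : b ≤ e := by linarith
  have d1 : degLen F a b σ = degLen F a b γ := by
    unfold degLen
    apply intervalIntegral.integral_congr_ae
    filter_upwards [hne'] with t ht htm
    rw [uIoc_of_le hab] at htm
    have hlt := lt_of_le_of_ne htm.2 ht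
    rw [hL t hlt.le, (hLe t hlt).deriv_eq]
  have d2 : degLen F b e σ = degLen F c d η := by
    have : degLen F c d η = ∫ t in b..e, F (η (t + (c - b))) * enorm2 (deriv η (t + (c - b))) := by
      rw [intervalIntegral.integral_comp_add_right (fun t => F (η t) * enorm2 (deriv η t))]
      simp [degLen, he]
    rw [this]
    unfold degLen
    apply intervalIntegral.integral_congr_ae
    filter_upwards with t htm
    rw [uIoc_of_le hbe] at htm
    rw [hR t htm.1.le, (hRe t htm.1).deriv_eq, deriv_comp_add_const]
  have a1 : sArea a b σ = sArea a b γ := by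
    unfold sArea
    apply intervalIntegral.integral_congr_ae
    filter_upwards [hne'] with t ht htm
    rw [uIoc_of_le hab] at htm
    have hlt := lt_of_le_of_ne htm.2 ht
    have h2 : (fun s => (σ s).2) =ᶠ[𝓝 t] fun s => (γ s).2 := (hLe t hlt).fun_comp Prod.snd
    rw [hL t hlt.le, h2.deriv_eq]
  have a2 : sArea b e σ = sArea c d η := by
    have : sArea c d η = ∫ t in b..e, (η (t + (c - b))).1 * deriv (fun s => (η s).2) (t + (c - b)) := by
      rw [intervalIntegral.integral_comp_add_right (fun t => (η t).1 * deriv (fun s => (η s).2) t)]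
      simp [sArea, he]
    rw [this]
    unfold sArea
    apply intervalIntegral.integral_congr_ae
    filter_upwards with t htm
    rw [uIoc_of_le hbe] at htm
    have h2 : (fun s => (σ s).2) =ᶠ[𝓝 t] fun s => (η (s + (c - b))).2 :=
      (hRe t htm.1).fun_comp Prod.snd
    rw [hR t htm.1.le, h2.deriv_eq,
      deriv_comp_add_const (fun s => (η s).2)]
  have d3 : degLen F a b σ + degLen F b e σ = degLen F a e σ :=
    intervalIntegral.integral_add_adjacent_intervals (ii_deg hF hσl a b) (ii_deg hF hσl b e)
  have a3 : sArea a b σ + sArea b e σ = sArea a e σ :=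
    intervalIntegral.integral_add_adjacent_intervals
      (ii_area (ll_fst hσl).continuous (ll_snd hσl) a b)
      (ii_area (ll_fst hσl).continuous (ll_snd hσl) b e)
  rw [← d1, ← d2, d3]
  refine dCC_le h0 ⟨hab.trans hbe, hσl, ?_, ?_⟩ ?_
  · rw [hL a hab, ha]
  · rw [hR e hbe, ← hd]; congr 1; simp [he]
  · rw [← a3, a1, a2, hA, hA']; ring

lemma dCC_self {F : ℝ × ℝ → ℝ} (h0 : ∀ p, 0 ≤ F p) (P : ℝ × ℝ × ℝ) : dCC F P P = 0 := by
  refine le_antisymm ?_ (dCC_nonneg h0 P P)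
  have := dCC_le (F := F) (P := P) (Q := P) (a := 0) (b := 0) (γ := fun _ => (P.1, P.2.1)) h0
    ⟨le_rfl, LocallyLipschitz.const _, rfl, rfl⟩ (by simp [sArea])
  simpa [degLen] using this

lemma proj_ll {Γ : ℝ → ℝ × ℝ × ℝ} (h : LocallyLipschitz Γ) : LocallyLipschitz (projCurve Γ) :=
  LocallyLipschitz.prodMk (LipschitzWith.prod_fst.locallyLipschitz.comp h)
    (LipschitzWith.prod_fst.locallyLipschitz.comp (LipschitzWith.prod_snd.locallyLipschitz.comp h))

lemma adm_bound {F : ℝ × ℝ → ℝ} (h0 : ∀ p, 0 ≤ F p) {Γ : ℝ → ℝ × ℝ × ℝ} {a b : ℝ}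
    (h : LocallyLipschitz Γ) (hA : Admissible a b Γ) {s t : ℝ} (has : a ≤ s) (hst : s ≤ t)
    (htb : t ≤ b) : dCC F (Γ s) (Γ t) ≤ degLen F s t (projCurve Γ) := by
  refine dCC_le h0 ⟨hst, proj_ll h, rfl, rfl⟩ ?_
  have h3 : LocallyLipschitz (fun s => (Γ s).2.2) :=
    LipschitzWith.prod_snd.locallyLipschitz.comp (LipschitzWith.prod_snd.locallyLipschitz.comp h)
  rw [← ll_ftc h3 s t]
  unfold sArea
  apply intervalIntegral.integral_congr_ae
  have hne' : ∀ᵐ u : ℝ, u ≠ t := by simp [ae_iff, measure_singleton]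
  filter_upwards [hne', hA] with u hu hAu hum
  rw [uIoc_of_le hst] at hum
  exact (hAu ⟨has.trans_lt hum.1, (lt_of_le_of_ne hum.2 hu).trans_le htb⟩).symm

lemma fin_telescope (n : ℕ) (u : Fin (n + 1) → ℝ) :
    ∑ i : Fin n, (u i.succ - u i.castSucc) = u (Fin.last n) - u 0 := by
  induction n with
  | zero => simp
  | succ n ih =>
    rw [Fin.sum_univ_castSucc]
    have := ih (fun i => u i.castSucc)
    simp only [Fin.succ_castSucc, Fin.succ_last] at this ⊢
    rw [this]
    simp

lemma pathLen_facts {F : ℝ × ℝ → ℝ} (hF : Continuous F) (h0 : ∀ p, 0 ≤ F p)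
    {Γ : ℝ → ℝ × ℝ × ℝ} {a b : ℝ} (hab : a ≤ b)
    (h : LocallyLipschitz Γ) (hA : Admissible a b Γ) :
    dCC F (Γ a) (Γ b) ≤ pathLen F a b Γ ∧ pathLen F a b Γ ≤ degLen F a b (projCurve Γ) := by
  have hub : ∀ x ∈ { x | ∃ (n : ℕ) (t : Fin (n + 1) → ℝ), Monotone t ∧ t 0 = a ∧
      t (Fin.last n) = b ∧ x = ∑ i : Fin n, dCC F (Γ (t i.castSucc)) (Γ (t i.succ)) },
      x ≤ degLen F a b (projCurve Γ) := by
    rintro x ⟨n, t, hm, ht0, htn, rfl⟩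
    have key : ∀ i : Fin n, dCC F (Γ (t i.castSucc)) (Γ (t i.succ)) ≤
        degLen F a (t i.succ) (projCurve Γ) - degLen F a (t i.castSucc) (projCurve Γ) := by
      intro i
      have e : degLen F a (t i.castSucc) (projCurve Γ) + degLen F (t i.castSucc) (t i.succ) (projCurve Γ)
          = degLen F a (t i.succ) (projCurve Γ) :=
        intervalIntegral.integral_add_adjacent_intervals (ii_deg hF (proj_ll h) _ _)
          (ii_deg hF (proj_ll h) _ _)
      rw [← e, add_sub_cancel_left]
      refine adm_bound h0 h hA ?_ (hm i.castSucc_lt_succ.le) ?_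
      · rw [← ht0]; exact hm (Fin.zero_le _)
      · rw [← htn]; exact hm (Fin.le_last _)
    refine (Finset.sum_le_sum fun i _ => key i).trans ?_
    rw [fin_telescope n (fun i => degLen F a (t i) (projCurve Γ)), ht0, htn]
    simp [degLen]
  have hmem : dCC F (Γ a) (Γ b) ∈ { x | ∃ (n : ℕ) (t : Fin (n + 1) → ℝ), Monotone t ∧ t 0 = a ∧
      t (Fin.last n) = b ∧ x = ∑ i : Fin n, dCC F (Γ (t i.castSucc)) (Γ (t i.succ)) } := by
    refine ⟨1, ![a, b], ?_, by simp, by simp [Fin.last], by simp⟩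
    intro i j hij
    fin_cases i <;> fin_cases j <;> simp_all
  exact ⟨le_csSup ⟨_, hub⟩ hmem, csSup_le ⟨_, hmem⟩ hub⟩

lemma lift_exists {a b : ℝ} {γ : ℝ → ℝ × ℝ} (h : LocallyLipschitz γ) (z : ℝ) :
    ∃ Γ : ℝ → ℝ × ℝ × ℝ, LocallyLipschitz Γ ∧ Admissible a b Γ ∧ projCurve Γ = γ ∧
      (Γ a).2.2 = z ∧ (Γ b).2.2 = z + sArea a b γ := by
  set g : ℝ → ℝ := fun t => (γ t).1 * deriv (fun s => (γ s).2) t with hg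
  have hii : ∀ x y, IntervalIntegrable g volume x y := fun x y =>
    ii_area (ll_fst h).continuous (ll_snd h) x y
  set G : ℝ → ℝ := fun t => z + ∫ u in a..t, g u with hG
  have hGl : LocallyLipschitz G := by
    intro x
    obtain ⟨K, hK⟩ := ll_deriv_bound (ll_snd h) (x - 1) (x + 1)
    obtain ⟨M, hM⟩ := (isCompact_Icc (a := x - 1) (b := x + 1)).exists_bound_of_continuousOn
      ((ll_fst h).continuous.continuousOn)
    have hx : x ∈ Icc (x - 1) (x + 1) := ⟨by linarith, by linarith⟩
    have hM0 : 0 ≤ M := (norm_nonneg _).trans (hM x hx)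
    have hK0 : 0 ≤ K := (norm_nonneg _).trans (hK x hx)
    refine ⟨(M * K).toNNReal, Icc (x - 1) (x + 1), Icc_mem_nhds (by linarith) (by linarith), ?_⟩
    apply LipschitzOnWith.of_dist_le_mul
    intro s hs t ht
    rw [Real.coe_toNNReal _ (by positivity), Real.dist_eq, Real.dist_eq]
    have e : G s - G t = ∫ u in t..s, g u := by
      have := intervalIntegral.integral_add_adjacent_intervals (hii a t) (hii t s)
      simp only [hG]
      rw [← this]; ring
    rw [e, ← Real.norm_eq_abs]
    apply intervalIntegral.norm_integral_le_of_norm_le_const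
    intro u hu
    have hu' : u ∈ Icc (x - 1) (x + 1) :=
      (convex_Icc (x - 1) (x + 1)).ordConnected.uIcc_subset ht hs (uIoc_subset_uIcc hu)
    rw [hg, norm_mul]
    exact mul_le_mul (hM u hu') (hK u hu') (norm_nonneg _) hM0
  have hloc : LocallyIntegrable g volume := by
    intro x
    refine ⟨Ioc (x - 1) (x + 1), Ioc_mem_nhds (by linarith) (by linarith), ?_⟩
    exact (intervalIntegrable_iff_integrableOn_Ioc_of_le (by linarith)).1 (hii _ _)
  refine ⟨fun t => ((γ t).1, (γ t).2, G t), (ll_fst h).prodMk ((ll_snd h).prodMk hGl), ?_, rfl, ?_, ?_⟩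
  · unfold Admissible
    filter_upwards [LocallyIntegrable.ae_hasDerivAt_integral hloc] with t ht _
    exact ((ht a).const_add z).deriv
  · simp [hG]
  · rfl

/-- `d_F` is a metric on `ℝ³` (nonnegative, symmetric, triangle inequality,
vanishing exactly on the diagonal; in particular positive between distinct points over the same
well), and it is a length metric: `d_F(P,Q)` is the infimum of `L(Γ)` over admissible locally
Lipschitz curves joining `P` to `Q`. -/
theorem dCC_metric_and_length_metric
    (W : ℝ × ℝ → ℝ) (pm pp : ℝ × ℝ) (hW : TwoWell W pm pp)
    (F : ℝ × ℝ → ℝ) (hF : F = fun p => Real.sqrt (W p)) :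
    (∀ P Q : ℝ × ℝ × ℝ, 0 ≤ dCC F P Q) ∧
    (∀ P Q : ℝ × ℝ × ℝ, dCC F P Q = dCC F Q P) ∧
    (∀ P Q R : ℝ × ℝ × ℝ, dCC F P R ≤ dCC F P Q + dCC F Q R) ∧
    (∀ P Q : ℝ × ℝ × ℝ, dCC F P Q = 0 ↔ P = Q) ∧
    (∀ P Q : ℝ × ℝ × ℝ, P ≠ Q →
      (((P.1, P.2.1) = pm ∧ (Q.1, Q.2.1) = pm) ∨ ((P.1, P.2.1) = pp ∧ (Q.1, Q.2.1) = pp)) →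
      0 < dCC F P Q) ∧
    (∀ P Q : ℝ × ℝ × ℝ, dCC F P Q =
      sInf { x | ∃ a b Γ, a ≤ b ∧ LocallyLipschitz Γ ∧ Admissible a b Γ ∧
        Γ a = P ∧ Γ b = Q ∧ pathLen F a b Γ = x }) := by
  subst hF
  have hF : Continuous (fun p => Real.sqrt (W p)) := Real.continuous_sqrt.comp hW.smooth.continuous
  have h0 : ∀ p, 0 ≤ (fun p => Real.sqrt (W p)) p := fun p => Real.sqrt_nonneg _
  refine ⟨dCC_nonneg h0, fun P Q => le_antisymm (dCC_symm_le h0 P Q) (dCC_symm_le h0 Q P),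
    dCC_triangle hF h0, fun P Q => ⟨fun h => ?_, ?_⟩, fun P Q hPQ _ => dCC_pos hW hPQ, fun P Q => ?_⟩
  · by_contra hPQ
    exact (dCC_pos hW hPQ).ne' h
  · rintro rfl
    exact dCC_self h0 P
  · have lift : ∀ a b γ, IsCurve a b γ (P.1, P.2.1) (Q.1, Q.2.1) → sArea a b γ = Q.2.2 - P.2.2 →
        ∃ Γ : ℝ → ℝ × ℝ × ℝ, LocallyLipschitz Γ ∧ Admissible a b Γ ∧ projCurve Γ = γ ∧
          Γ a = P ∧ Γ b = Q := by
      rintro a b γ ⟨hab, hl, ha, hb⟩ hA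
      obtain ⟨Γ, h1, h2, rfl, h4, h5⟩ := lift_exists (a := a) (b := b) hl P.2.2
      simp only [projCurve, Prod.mk.injEq] at ha hb
      refine ⟨Γ, h1, h2, rfl, Prod.ext ha.1 (Prod.ext ha.2 h4), Prod.ext hb.1 (Prod.ext hb.2 ?_)⟩
      rw [h5, hA]; ring
    apply le_antisymm
    · apply le_csInf
      · obtain ⟨a, b, γ, h1, h2⟩ := exists_curve P Q
        obtain ⟨Γ, g1, g2, -, g4, g5⟩ := lift a b γ h1 h2
        exact ⟨_, a, b, Γ, h1.1, g1, g2, g4, g5, rfl⟩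
      · rintro x ⟨a, b, Γ, hab, g1, g2, rfl, rfl, rfl⟩
        exact (pathLen_facts hF h0 hab g1 g2).1
    · apply le_csInf
      · obtain ⟨a, b, γ, h1, h2⟩ := exists_curve P Q
        exact ⟨_, a, b, γ, h1, h2, rfl⟩
      · rintro x ⟨a, b, γ, h1, h2, rfl⟩
        obtain ⟨Γ, g1, g2, rfl, g4, g5⟩ := lift a b γ h1 h2
        refine le_trans (csInf_le ⟨0, ?_⟩ ⟨a, b, Γ, h1.1, g1, g2, g4, g5, rfl⟩)
          (pathLen_facts hF h0 h1.1 g1 g2).2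
        rintro x ⟨a, b, Γ, hab, g1, g2, rfl, rfl, rfl⟩
        exact (dCC_nonneg h0 _ _).trans (pathLen_facts hF h0 hab g1 g2).1
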